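/- A Peano space contains at most countably many maximal cyclic subsets. -/

import Mathlib

open Metric Set

/-- A Jordan curve: a subset homeomorphic to the circle. -/
def IsJordanCurve {X : Type} [TopologicalSpace X] (J : Set X) : Prop :=
  Nonempty (AddCircle (1 : ℝ) ≃ₜ J)

/-- A set is cyclicly connected if every pair of its points lies on a Jordan curve in it. -/
def CyclicallyConnected {X : Type} [TopologicalSpace X] (C : Set X) : Prop :=
  ∀ x ∈ C, ∀ y ∈ C, ∃ J : Set X, J ⊆ C ∧ IsJordanCurve J ∧ x ∈ J ∧ y ∈ J

/-- A maximal cyclic subset: non-degenerate, cyclicly connected, and not a proper subset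
of any cyclicly connected subset. -/
def MaximalCyclic {X : Type} [TopologicalSpace X] (T : Set X) : Prop :=
  ¬ T.Subsingleton ∧ CyclicallyConnected T ∧
    ∀ C : Set X, CyclicallyConnected C → T ⊆ C → C = T

/-!
A maximal cyclic set is determined by any two of its points `p ≠ q`: it is the set of all points
that share a Jordan curve with `p` and also one with `q`. The reason is that, although cocyclicity
is not transitive, two points that are both cocyclic with two distinct cocyclic points `p` and `q`
are cocyclic with each other.

Let `B` and `B'` be disjoint path-connected sets. Two maximal cyclic sets `T` and `T'` that both
meet `B` and `B'` contain Jordan curves `J` and `J'` meeting both as well. Arcs in `B` and in `B'`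
from `J` to `J'` close up, through `J` and `J'`, to a Jordan curve that meets each of `J` and `J'`
in two points. This curve lies in both `T` and `T'`, hence `T = T'`. A maximal cyclic set has two
points, which are separated by disjoint members of any basis, so a countable basis of path-connected
open sets leaves room for only countably many.

A compact locally connected metric space has such a basis because nearby points are joined by small
paths, which are uniform limits of step functions with ever smaller jumps. Paths contain arcs: a
minimal closed set of parameters whose gaps have ends with equal images yields a path with convex
fibres, and collapsing the fibres makes it injective.
-/

open Filter Topology unitInterval

section LocalPathConnectedness

variable {X : Type*} [PseudoMetricSpace X]

lemma exists_isPreconnected_subset_ball_of_dist_lt [CompactSpace X] [LocallyConnectedSpace X]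
    {ε : ℝ} (hε : 0 < ε) :
    ∃ δ > 0, ∀ x y : X, dist x y < δ →
      ∃ C : Set X, IsPreconnected C ∧ x ∈ C ∧ y ∈ C ∧ C ⊆ ball x ε := by
  have h (z : X) : ∃ U : Set X, U ⊆ ball z (ε / 2) ∧ IsOpen U ∧ z ∈ U ∧ IsConnected U :=
    locallyConnectedSpace_iff_subsets_isOpen_isConnected.1 ‹_› z _ (ball_mem_nhds z (half_pos hε))
  choose U hUb hUo hzU hUc using h
  obtain ⟨δ, hδ, H⟩ := lebesgue_number_lemma_of_metric (s := (univ : Set X)) isCompact_univ hUo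
    (fun z _ => mem_iUnion.2 ⟨z, hzU z⟩)
  refine ⟨δ, hδ, fun x y hxy => ?_⟩
  obtain ⟨z, hz⟩ := H x trivial
  have hx : x ∈ U z := hz (mem_ball_self hδ)
  refine ⟨U z, (hUc z).isPreconnected, hx, hz (mem_ball'.2 hxy), fun w hw => ?_⟩
  have hwz := mem_ball.1 (hUb z hw)
  have hxz := mem_ball.1 (hUb z hx)
  rw [mem_ball]
  linarith [dist_triangle_right w x z]

/-- `f` is a step function on `ℝ` with finitely many jumps, all of size less than `δ`, which equals
`x` up to time `0` and `y` from time `1` on: a discrete approximation of a path. The two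
constructors mirror the concatenation of paths, so that refinements can be built by recursion. -/
inductive IsStepPath (δ : ℝ) : X → X → (ℝ → X) → Prop
  | jump {x y : X} (h : dist x y < δ) : IsStepPath δ x y fun t => if t < 1 then x else y
  | trans {x y z : X} {f g : ℝ → X} (hf : IsStepPath δ x y f) (hg : IsStepPath δ y z g) :
      IsStepPath δ x z fun t => if t ≤ 1 / 2 then f (2 * t) else g (2 * t - 1)

namespace IsStepPath

variable {δ : ℝ} {x y : X} {f : ℝ → X}

lemma mono {δ' : ℝ} (hf : IsStepPath δ x y f) (hδ : δ ≤ δ') : IsStepPath δ' x y f := by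
  induction hf with
  | jump h => exact .jump (h.trans_le hδ)
  | trans _ _ ihf ihg => exact ihf.trans ihg

lemma apply_of_nonpos (hf : IsStepPath δ x y f) {t : ℝ} (ht : t ≤ 0) : f t = x := by
  induction hf generalizing t with
  | jump _ => exact if_pos (by linarith)
  | trans _ _ ihf _ => exact (if_pos (by linarith)).trans (ihf (by linarith))

lemma apply_of_one_le (hf : IsStepPath δ x y f) {t : ℝ} (ht : 1 ≤ t) : f t = y := by
  induction hf generalizing t with
  | jump _ => exact if_neg (by linarith)
  | trans _ _ _ ihg => exact (if_neg (by linarith)).trans (ihg (by linarith))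

lemma eventually_dist_lt (hf : IsStepPath δ x y f) (t : ℝ) :
    ∀ᶠ s in 𝓝 t, dist (f s) (f t) < δ := by
  induction hf generalizing t with
  | jump h =>
    refine .of_forall fun s => ?_
    have hδ := dist_nonneg.trans_lt h
    have h' := (dist_comm _ _).trans_lt h
    dsimp only
    split_ifs <;> simp only [dist_self, h, h', hδ]
  | @trans x y z f g hf hg ihf ihg =>
    have hf' : ∀ᶠ s in 𝓝 t, dist (f (2 * s)) (f (2 * t)) < δ :=
      (continuous_const_mul (2 : ℝ)).continuousAt.eventually (ihf (2 * t))
    have hg' : ∀ᶠ s in 𝓝 t, dist (g (2 * s - 1)) (g (2 * t - 1)) < δ :=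
      (by fun_prop : Continuous fun s : ℝ => 2 * s - 1).continuousAt.eventually (ihg (2 * t - 1))
    rcases lt_trichotomy t (1 / 2) with ht | rfl | ht
    · filter_upwards [hf', Iio_mem_nhds ht] with s hs hst
      rwa [if_pos ht.le, if_pos (le_of_lt hst)]
    · filter_upwards [hf', hg'] with s hsf hsg
      rw [if_pos le_rfl]
      split_ifs
      · exact hsf
      · rwa [hf.apply_of_one_le (by norm_num), ← hg.apply_of_nonpos (t := 2 * (1 / 2) - 1)
          (by norm_num)]
    · filter_upwards [hg', Ioi_mem_nhds ht] with s hs hst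
      rwa [if_neg ht.not_ge, if_neg (not_le.2 hst)]

lemma exists_of_isPreconnected {C : Set X} (hC : IsPreconnected C) (hδ : 0 < δ) (hx : x ∈ C)
    (hy : y ∈ C) : ∃ f, IsStepPath δ x y f ∧ ∀ t, f t ∈ C := by
  have hjump {a b : X} (h : dist a b < δ) (ha : a ∈ C) (hb : b ∈ C) :
      ∃ f, IsStepPath δ a b f ∧ ∀ t, f t ∈ C :=
    ⟨_, .jump h, fun t => by split_ifs <;> assumption⟩
  refine hC.induction₂' (fun a b => a ∈ C → b ∈ C → ∃ f, IsStepPath δ a b f ∧ ∀ t, f t ∈ C)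
    (fun a _ => ?_) (fun a b c _ hb _ hab hbc ha hc => ?_) hx hy hx hy
  · filter_upwards [nhdsWithin_le_nhds (ball_mem_nhds a hδ)] with b hb
    exact ⟨hjump (mem_ball'.1 hb), hjump (mem_ball.1 hb)⟩
  · obtain ⟨f, hf, hfC⟩ := hab ha hb
    obtain ⟨g, hg, hgC⟩ := hbc hb hc
    exact ⟨_, hf.trans hg, fun t => by split_ifs <;> simp only [hfC, hgC]⟩

lemma exists_refinement (hf : IsStepPath δ x y f) {ε δ' : ℝ} (hδ' : 0 < δ')
    (H : ∀ x y : X, dist x y < δ →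
      ∃ C : Set X, IsPreconnected C ∧ x ∈ C ∧ y ∈ C ∧ C ⊆ ball x ε) :
    ∃ g, IsStepPath δ' x y g ∧ ∀ t, dist (f t) (g t) ≤ ε := by
  induction hf with
  | @jump x y h =>
    obtain ⟨C, hC, hx, hy, hCx⟩ := H x y h
    obtain ⟨g, hg, hgC⟩ := exists_of_isPreconnected hC hδ' hx hy
    refine ⟨g, hg, fun t => ?_⟩
    dsimp only
    split_ifs with ht
    · exact (mem_ball'.1 (hCx (hgC t))).le
    · rw [hg.apply_of_one_le (not_lt.1 ht), dist_self]
      exact (pos_of_mem_ball (hCx hx)).le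
  | trans _ _ ihf ihg =>
    obtain ⟨f', hf', hff'⟩ := ihf
    obtain ⟨g', hg', hgg'⟩ := ihg
    refine ⟨_, hf'.trans hg', fun t => ?_⟩
    dsimp only
    split_ifs <;> simp only [hff', hgg']

end IsStepPath

lemma continuous_of_forall_exists_dist_le {Y : Type*} [TopologicalSpace Y] {f : Y → X}
    (H : ∀ ε > 0, ∃ F : Y → X, (∀ t, dist (F t) (f t) ≤ ε) ∧
      ∀ t, ∀ᶠ s in 𝓝 t, dist (F s) (F t) ≤ ε) : Continuous f := by
  refine continuous_iff_continuousAt.2 fun t => Metric.tendsto_nhds.2 fun ε hε => ?_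
  obtain ⟨F, hFf, hF⟩ := H (ε / 4) (by positivity)
  filter_upwards [hF t] with s hs
  have hsF := dist_comm (f s) (F s)
  linarith [dist_triangle4 (f s) (F s) (F t) (f t), hFf s, hFf t]

lemma exists_seq_isStepPath [CompactSpace X] [LocallyConnectedSpace X] {ε : ℝ} (hε : 0 < ε) :
    ∃ δ > 0, ∀ x y : X, dist x y < δ → ∃ F : ℕ → ℝ → X, (∀ t, dist x (F 0 t) ≤ ε) ∧
      (∀ n, IsStepPath (ε / 2 ^ n) x y (F n)) ∧
      ∀ n t, dist (F n t) (F (n + 1) t) ≤ ε / 2 ^ n := by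
  have hη (n : ℕ) : 0 < ε / 2 ^ n := by positivity
  choose δ₀ hδ₀ H using fun n => exists_isPreconnected_subset_ball_of_dist_lt (X := X) (hη n)
  set δ : ℕ → ℝ := fun n => min (δ₀ n) (ε / 2 ^ n)
  have hδ (n : ℕ) : 0 < δ n := lt_min (hδ₀ n) (hη n)
  refine ⟨δ 0, hδ 0, fun x y hxy => ?_⟩
  have hstep (n : ℕ) (f : ℝ → X) (hf : IsStepPath (δ n) x y f) :
      ∃ g, IsStepPath (δ (n + 1)) x y g ∧ ∀ t, dist (f t) (g t) ≤ ε / 2 ^ n :=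
    hf.exists_refinement (hδ (n + 1)) fun a b hab => H n a b (hab.trans_le (min_le_left _ _))
  choose! R hR hdist using hstep
  set F : ℕ → ℝ → X := fun n => Nat.rec (fun t => if t < 1 then x else y) R n
  have hF (n : ℕ) : IsStepPath (δ n) x y (F n) := by
    induction n with
    | zero => exact .jump hxy
    | succ n ih => exact hR n _ ih
  refine ⟨F, fun t => ?_, fun n => (hF n).mono (min_le_right _ _), fun n => hdist n _ (hF n)⟩
  change dist x (if t < 1 then x else y) ≤ ε
  split_ifs
  · rw [dist_self]; exact hε.le
  · simpa using hxy.le.trans (min_le_right _ _)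

lemma exists_joinedIn_ball_of_dist_lt {X : Type*} [MetricSpace X] [CompactSpace X]
    [LocallyConnectedSpace X] {ε : ℝ} (hε : 0 < ε) :
    ∃ δ > 0, ∀ x y : X, dist x y < δ → JoinedIn (ball x ε) x y := by
  obtain ⟨δ, hδ, H⟩ := exists_seq_isStepPath (X := X) (ε := ε / 4 / 2) (by positivity)
  refine ⟨δ, hδ, fun x y hxy => ?_⟩
  obtain ⟨F, hF₀, hF, hdist⟩ := H x y hxy
  have hdist' (t : ℝ) (n : ℕ) : dist (F n t) (F (n + 1) t) ≤ ε / 4 / 2 / 2 ^ n := hdist n t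
  choose f hf using fun t =>
    cauchySeq_tendsto_of_complete (cauchySeq_of_le_geometric_two (hdist' t))
  have hFf (n : ℕ) (t : ℝ) : dist (F n t) (f t) ≤ ε / 4 / 2 ^ n :=
    dist_le_of_le_geometric_two_of_tendsto (hdist' t) (hf t) n
  have hcont : Continuous f := by
    refine continuous_of_forall_exists_dist_le fun η hη => ?_
    have hlim : Tendsto (fun n : ℕ => ε / 4 / 2 ^ n) atTop (𝓝 0) :=
      tendsto_const_nhds.div_atTop (tendsto_pow_atTop_atTop_of_one_lt one_lt_two)
    obtain ⟨n, hn⟩ := (hlim.eventually_le_const hη).exists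
    refine ⟨F n, fun t => (hFf n t).trans hn, fun t => ?_⟩
    filter_upwards [(hF n).eventually_dist_lt t] with s hs
    exact (hs.le.trans (by gcongr ?_ / _; linarith)).trans hn
  have hf_eq {z : X} {t : ℝ} (h : ∀ n, F n t = z) : f t = z :=
    tendsto_nhds_unique (hf t) (by simpa only [h] using tendsto_const_nhds)
  refine JoinedIn.ofLine hcont.continuousOn (hf_eq fun n => (hF n).apply_of_nonpos le_rfl)
    (hf_eq fun n => (hF n).apply_of_one_le le_rfl) ?_
  rintro _ ⟨t, -, rfl⟩
  have hFf₀ : dist (F 0 t) (f t) ≤ ε / 4 := by simpa using hFf 0 t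
  rw [mem_ball']
  linarith [dist_triangle x (F 0 t) (f t), hF₀ t]

theorem locallyPathConnectedSpace_of_compact_locallyConnected {X : Type*} [MetricSpace X]
    [CompactSpace X] [LocallyConnectedSpace X] : LocallyPathConnectedSpace X := by
  rw [locallyPathConnectedSpace_iff_pathComponentIn_mem_nhds]
  intro x u hu hxu
  obtain ⟨ε, hε, hεu⟩ := Metric.isOpen_iff.1 hu x hxu
  obtain ⟨δ, hδ, H⟩ := exists_joinedIn_ball_of_dist_lt (X := X) hε
  exact Filter.mem_of_superset (ball_mem_nhds x hδ) fun y hy => (H x y (mem_ball'.1 hy)).mono hεu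

end LocalPathConnectedness

section LoopErasure

variable {K : Set I}

/-- The last parameter of `K` up to time `t`. -/
noncomputable def lastBefore (K : Set I) (t : I) : I := sSup (K ∩ Iic t)

/-- The first parameter of `K` from time `t` on. -/
noncomputable def firstAfter (K : Set I) (t : I) : I := sInf (K ∩ Ici t)

lemma isGreatest_lastBefore (hK : IsClosed K) (h₀ : 0 ∈ K) (t : I) :
    IsGreatest (K ∩ Iic t) (lastBefore K t) :=
  (hK.inter isClosed_Iic).isCompact.isGreatest_sSup ⟨0, h₀, unitInterval.nonneg'⟩

lemma isLeast_firstAfter (hK : IsClosed K) (h₁ : 1 ∈ K) (t : I) :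
    IsLeast (K ∩ Ici t) (firstAfter K t) :=
  (hK.inter isClosed_Ici).isCompact.isLeast_sInf ⟨1, h₁, unitInterval.le_one'⟩

lemma monotone_lastBefore (K : Set I) : Monotone (lastBefore K) := fun _ _ hst =>
  sSup_le_sSup (inter_subset_inter_right _ (Iic_subset_Iic.2 hst))

variable {X : Type*}

/-- Running through `γ` only at the parameters in `K`, and resting over the gaps of `K`, erases
loops of `γ`: the two ends of every gap have the same image. -/
structure IsLoopErasure (γ : I → X) (K : Set I) : Prop where
  isClosed : IsClosed K
  zero_mem : 0 ∈ K
  one_mem : 1 ∈ K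
  apply_lastBefore : ∀ t, γ (lastBefore K t) = γ (firstAfter K t)

namespace IsLoopErasure

variable {γ : I → X}

lemma univ (γ : I → X) : IsLoopErasure γ univ where
  isClosed := isClosed_univ
  zero_mem := mem_univ 0
  one_mem := mem_univ 1
  apply_lastBefore t := by simp only [lastBefore, firstAfter, univ_inter, csSup_Iic, csInf_Ici]

lemma diff_Ioo (hK : IsLoopErasure γ K) {x y : I} (hx : x ∈ K) (hy : y ∈ K)
    (h : γ x = γ y) : IsLoopErasure γ (K \ Ioo x y) where
  isClosed := hK.isClosed.sdiff isOpen_Ioo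
  zero_mem := ⟨hK.zero_mem, fun h => h.1.not_ge unitInterval.nonneg'⟩
  one_mem := ⟨hK.one_mem, fun h => h.2.not_ge unitInterval.le_one'⟩
  apply_lastBefore t := by
    obtain ⟨⟨hr, hrt⟩, hr'⟩ := isGreatest_lastBefore hK.isClosed hK.zero_mem t
    obtain ⟨⟨he, het⟩, he'⟩ := isLeast_firstAfter hK.isClosed hK.one_mem t
    have hx' : x ∈ K \ Ioo x y := ⟨hx, fun h => h.1.false⟩
    have hy' : y ∈ K \ Ioo x y := ⟨hy, fun h => h.2.false⟩
    have of_notMem (hr₀ : lastBefore K t ∉ Ioo x y) (he₀ : firstAfter K t ∉ Ioo x y) :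
        γ (lastBefore (K \ Ioo x y) t) = γ (firstAfter (K \ Ioo x y) t) := by
      have hr₁ : lastBefore (K \ Ioo x y) t = lastBefore K t :=
        IsGreatest.csSup_eq ⟨⟨⟨hr, hr₀⟩, hrt⟩, fun k hk => hr' ⟨hk.1.1, hk.2⟩⟩
      have he₁ : firstAfter (K \ Ioo x y) t = firstAfter K t :=
        IsLeast.csInf_eq ⟨⟨⟨he, he₀⟩, het⟩, fun k hk => he' ⟨hk.1.1, hk.2⟩⟩
      rw [hr₁, he₁, hK.apply_lastBefore]
    rcases le_or_gt t x with htx | hxt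
    · exact of_notMem (fun h => h.1.not_ge (hrt.trans htx)) fun h => h.1.not_ge (he' ⟨hx, htx⟩)
    rcases le_or_gt y t with hyt | hty
    · exact of_notMem (fun h => h.2.not_ge (hr' ⟨hy, hyt⟩)) fun h => h.2.not_ge (hyt.trans het)
    have hr₁ : lastBefore (K \ Ioo x y) t = x := IsGreatest.csSup_eq
      ⟨⟨hx', hxt.le⟩, fun k hk => not_lt.1 fun hxk => hk.1.2 ⟨hxk, hk.2.trans_lt hty⟩⟩
    have he₁ : firstAfter (K \ Ioo x y) t = y := IsLeast.csInf_eq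
      ⟨⟨hy', hty.le⟩, fun k hk => not_lt.1 fun hky => hk.1.2 ⟨hxt.trans_le hk.2, hky⟩⟩
    rw [hr₁, he₁, h]

end IsLoopErasure

lemma tendsto_lastBefore_sInter {c : Set (Set I)} (hc : ∀ K ∈ c, IsClosed K ∧ 0 ∈ K)
    [IsCodirectedOrder c] [Nonempty c] (t : I) :
    Tendsto (fun K : c => lastBefore K t) atBot (𝓝 (lastBefore (⋂₀ c) t)) := by
  have hmem (K : c) := (isGreatest_lastBefore (hc K K.2).1 (hc K K.2).2 t).1
  have hlim := tendsto_atBot_iInf fun K K' : c => fun h : K ≤ K' =>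
    (sSup_le_sSup (inter_subset_inter_left (Iic t) h) : lastBefore K t ≤ lastBefore K' t)
  suffices h : lastBefore (⋂₀ c) t = ⨅ K : c, lastBefore K t by rwa [h]
  refine IsGreatest.csSup_eq ⟨⟨fun K hK => ?_, ?_⟩, fun k hk => ?_⟩
  · exact (hc K hK).1.mem_of_tendsto hlim <|
      (eventually_le_atBot (⟨K, hK⟩ : c)).mono fun K' hK' => hK' (hmem K').1
  · exact (iInf_le (fun K : c => lastBefore K t) _).trans (hmem (Classical.arbitrary c)).2
  · exact le_iInf fun K => le_sSup ⟨hk.1 K K.2, hk.2⟩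

lemma tendsto_firstAfter_sInter {c : Set (Set I)} (hc : ∀ K ∈ c, IsClosed K ∧ 1 ∈ K)
    [IsCodirectedOrder c] [Nonempty c] (t : I) :
    Tendsto (fun K : c => firstAfter K t) atBot (𝓝 (firstAfter (⋂₀ c) t)) := by
  have hmem (K : c) := (isLeast_firstAfter (hc K K.2).1 (hc K K.2).2 t).1
  have hlim := tendsto_atBot_iSup fun K K' : c => fun h : K ≤ K' =>
    (sInf_le_sInf (inter_subset_inter_left (Ici t) h) : firstAfter K' t ≤ firstAfter K t)
  suffices h : firstAfter (⋂₀ c) t = ⨆ K : c, firstAfter K t by rwa [h]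
  refine IsLeast.csInf_eq ⟨⟨fun K hK => ?_, ?_⟩, fun k hk => ?_⟩
  · exact (hc K hK).1.mem_of_tendsto hlim <|
      (eventually_le_atBot (⟨K, hK⟩ : c)).mono fun K' hK' => hK' (hmem K').1
  · exact (hmem (Classical.arbitrary c)).2.trans (le_iSup (fun K : c => firstAfter K t) _)
  · exact iSup_le fun K => sInf_le ⟨hk.1 K K.2, hk.2⟩

variable {γ : I → X}

lemma IsLoopErasure.sInter [TopologicalSpace X] [T2Space X] (hγ : Continuous γ)
    {c : Set (Set I)} (hc : ∀ K ∈ c, IsLoopErasure γ K) (hchain : IsChain (· ⊆ ·) c)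
    (hne : c.Nonempty) : IsLoopErasure γ (⋂₀ c) where
  isClosed := isClosed_sInter fun K hK => (hc K hK).isClosed
  zero_mem K hK := (hc K hK).zero_mem
  one_mem K hK := (hc K hK).one_mem
  apply_lastBefore t := by
    have := hne.to_subtype
    have : IsCodirectedOrder c := ⟨fun K K' => (hchain.total K.2 K'.2).elim
      (fun h => ⟨K, le_rfl, h⟩) fun h => ⟨K', h, le_rfl⟩⟩
    have hlast := (hγ.tendsto _).comp
      (tendsto_lastBefore_sInter (fun K hK => ⟨(hc K hK).isClosed, (hc K hK).zero_mem⟩) t)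
    have hfirst := (hγ.tendsto _).comp
      (tendsto_firstAfter_sInter (fun K hK => ⟨(hc K hK).isClosed, (hc K hK).one_mem⟩) t)
    exact tendsto_nhds_unique hlast (hfirst.congr fun K => ((hc K K.2).apply_lastBefore t).symm)

lemma exists_minimal_isLoopErasure [TopologicalSpace X] [T2Space X] (hγ : Continuous γ) :
    ∃ K, IsLoopErasure γ K ∧ ∀ x ∈ K, ∀ y ∈ K, γ x = γ y → Disjoint (Ioo x y) K := by
  obtain ⟨K, -, hK⟩ := zorn_superset_nonempty {K | IsLoopErasure γ K}
    (fun c hc hchain hne => ⟨⋂₀ c, .sInter hγ hc hchain hne, fun K hK => sInter_subset_of_mem hK⟩)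
    _ (IsLoopErasure.univ γ)
  refine ⟨K, hK.prop, fun x hx y hy h => disjoint_left.2 fun z hz hzK => ?_⟩
  exact ((hK.eq_of_subset (hK.prop.diff_Ioo hx hy h) sdiff_subset).ge hzK).2 hz

lemma IsLoopErasure.continuous_comp_lastBefore [PseudoMetricSpace X] (hK : IsLoopErasure γ K)
    (hγ : Continuous γ) : Continuous (γ ∘ lastBefore K) := by
  have key {s t : I} (hst : s ≤ t) : γ (lastBefore K s) = γ (lastBefore K t) ∨
      ∃ a ∈ Icc s t, ∃ b ∈ Icc s t, γ (lastBefore K s) = γ a ∧ γ (lastBefore K t) = γ b := by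
    have hr := isGreatest_lastBefore hK.isClosed hK.zero_mem t
    have he := isLeast_firstAfter hK.isClosed hK.one_mem s
    rcases le_or_gt s (lastBefore K t) with h | h
    · exact .inr ⟨_, ⟨he.1.2, (he.2 ⟨hr.1.1, h⟩).trans hr.1.2⟩, _, ⟨h, hr.1.2⟩,
        hK.apply_lastBefore s, rfl⟩
    · exact .inl (congrArg γ ((monotone_lastBefore K hst).antisymm (le_sSup ⟨hr.1.1, h.le⟩)))
  refine Metric.continuous_iff'.2 fun t ε hε => ?_
  obtain ⟨η, hη, H⟩ := Metric.uniformContinuous_iff.1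
    (CompactSpace.uniformContinuous_of_continuous hγ) ε hε
  have hclose {s t : I} (hst : s ≤ t) (hd : dist s t < η) :
      dist (γ (lastBefore K s)) (γ (lastBefore K t)) < ε := by
    rcases key hst with h | ⟨a, ha, b, hb, has, hbt⟩
    · rwa [h, dist_self]
    · rw [has, hbt]
      rw [dist_comm, Subtype.dist_eq, Real.dist_eq,
        abs_of_nonneg (sub_nonneg.2 (Subtype.coe_le_coe.2 hst))] at hd
      exact H ((Real.dist_le_of_mem_Icc ha hb).trans_lt hd)
  filter_upwards [ball_mem_nhds t hη] with s hs
  rcases le_total s t with hst | hts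
  · exact hclose hst hs
  · exact (dist_comm _ _).trans_lt (hclose hts (mem_ball'.1 hs))

lemma exists_continuous_ordConnected_fibres [MetricSpace X] (hγ : Continuous γ) :
    ∃ δ : I → X, Continuous δ ∧ δ 0 = γ 0 ∧ δ 1 = γ 1 ∧
      ∀ x y, δ x = δ y → ∀ z ∈ Icc x y, δ z = δ x := by
  obtain ⟨K, hK, hmin⟩ := exists_minimal_isLoopErasure hγ
  have hr := isGreatest_lastBefore hK.isClosed hK.zero_mem
  refine ⟨γ ∘ lastBefore K, hK.continuous_comp_lastBefore hγ, ?_, ?_, fun x y hxy z hz => ?_⟩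
  · exact congrArg γ ((hr 0).1.2.antisymm unitInterval.nonneg')
  · exact congrArg γ (unitInterval.le_one'.antisymm ((hr 1).2 ⟨hK.one_mem, self_mem_Iic⟩))
  rcases (monotone_lastBefore K hz.1).eq_or_lt with hxz | hxz
  · exact congrArg γ hxz.symm
  rcases (monotone_lastBefore K hz.2).eq_or_lt with hzy | hzy
  · exact (congrArg γ hzy).trans hxy.symm
  exact absurd (hr z).1.1 (disjoint_left.1
    (hmin _ (hr x).1.1 _ (hr y).1.1 hxy) ⟨hxz, hzy⟩)

end LoopErasure

/-- `A` is an arc from `x` to `y`, that is, an injective continuous image of a compact interval.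
A single point counts as a degenerate arc. -/
def IsArc {X : Type*} [TopologicalSpace X] (A : Set X) (x y : X) : Prop :=
  ∃ (γ : ℝ → X) (s t : ℝ), s ≤ t ∧ ContinuousOn γ (Icc s t) ∧ InjOn γ (Icc s t) ∧
    γ s = x ∧ γ t = y ∧ γ '' Icc s t = A

section Reparametrization

variable {X : Type*}

lemma continuous_infDist_image_Iic [PseudoMetricSpace X] {δ : I → X} (hδ : Continuous δ) :
    Continuous fun p : I × I => infDist (δ p.1) (δ '' Iic p.2) := by
  have hIic (t : I) : Iic t = (fun w => min t w) '' univ :=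
    Subset.antisymm (fun w hw => ⟨w, trivial, min_eq_right hw⟩)
      (image_subset_iff.2 fun w _ => min_le_left t w)
  have heq (p : I × I) :
      infDist (δ p.1) (δ '' Iic p.2) = sInf ((fun w => dist (δ p.1) (δ (min p.2 w))) '' univ) := by
    rw [infDist_eq_iInf, ← sInf_image', hIic, image_image, image_image]
  simp only [heq]
  refine isCompact_univ.continuous_sInf (f := fun (p : I × I) w => dist (δ p.1) (δ (min p.2 w))) ?_
  simp only [Function.HasUncurry.uncurry, id]
  fun_prop

/-- The average distance from the points of the curve `δ` to its initial segment up to time `t`.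
As a function of `t` it serves to reparametrise `δ`: if `δ` has convex fibres, it decreases as soon
as the curve moves, because the curve does not return to an initial segment that it has left. -/
noncomputable def meanInfDistIic [PseudoMetricSpace X] (δ : I → X) (t : I) : ℝ :=
  ∫ u in (0 : ℝ)..1, infDist (δ (projIcc 0 1 zero_le_one u)) (δ '' Iic t)

lemma continuous_meanInfDistIic [PseudoMetricSpace X] {δ : I → X} (hδ : Continuous δ) :
    Continuous (meanInfDistIic δ) := by
  have hproj : Continuous fun p : I × ℝ => ((projIcc 0 1 zero_le_one p.2 : I), p.1) :=
    (continuous_projIcc.comp continuous_snd).prodMk continuous_fst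
  have hcomp := (continuous_infDist_image_Iic hδ).comp hproj
  have h : Continuous (Function.uncurry fun (t : I) (u : ℝ) =>
      infDist (δ (projIcc 0 1 zero_le_one u)) (δ '' Iic t)) := hcomp
  exact intervalIntegral.continuous_parametric_intervalIntegral_of_continuous' h 0 1

lemma continuous_infDist_projIcc [PseudoMetricSpace X] {δ : I → X} (hδ : Continuous δ) (s : Set X) :
    Continuous fun u : ℝ => infDist (δ (projIcc 0 1 zero_le_one u)) s :=
  (continuous_infDist_pt s).comp (hδ.comp continuous_projIcc)

lemma infDist_image_Iic_antitone [PseudoMetricSpace X] (δ : I → X) (x : X) :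
    Antitone fun t => infDist x (δ '' Iic t) := fun _ _ hst =>
  infDist_le_infDist_of_subset (image_mono (Iic_subset_Iic.2 hst)) (nonempty_Iic.image δ)

lemma antitone_meanInfDistIic [PseudoMetricSpace X] {δ : I → X} (hδ : Continuous δ) :
    Antitone (meanInfDistIic δ) := fun _ _ hst =>
  intervalIntegral.integral_mono zero_le_one
    ((continuous_infDist_projIcc hδ _).intervalIntegrable _ _)
    ((continuous_infDist_projIcc hδ _).intervalIntegrable _ _)
    fun _ => infDist_image_Iic_antitone δ _ hst

lemma meanInfDistIic_lt [MetricSpace X] {δ : I → X} (hδ : Continuous δ) {s t : I} (hst : s ≤ t)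
    (h : δ t ∉ δ '' Iic s) : meanInfDistIic δ t < meanInfDistIic δ s := by
  refine intervalIntegral.integral_lt_integral_of_continuousOn_of_le_of_exists_lt zero_lt_one
    (continuous_infDist_projIcc hδ _).continuousOn (continuous_infDist_projIcc hδ _).continuousOn
    (fun u _ => infDist_image_Iic_antitone δ _ hst) ⟨t, t.2, ?_⟩
  have hclosed : IsClosed (δ '' Iic s) := (isClosed_Iic.isCompact.image hδ).isClosed
  rw [projIcc_val]
  calc infDist (δ t) (δ '' Iic t) = 0 := infDist_zero_of_mem (mem_image_of_mem δ self_mem_Iic)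
    _ < infDist (δ t) (δ '' Iic s) := (hclosed.notMem_iff_infDist_pos (nonempty_Iic.image δ)).1 h

lemma meanInfDistIic_eq_iff [MetricSpace X] {δ : I → X} (hδ : Continuous δ)
    (hfib : ∀ x y, δ x = δ y → ∀ z ∈ Icc x y, δ z = δ x) (s t : I) :
    meanInfDistIic δ s = meanInfDistIic δ t ↔ δ s = δ t := by
  wlog hst : s ≤ t generalizing s t
  · rw [eq_comm, this t s (le_of_not_ge hst), eq_comm]
  refine ⟨fun h => by_contra fun hne => (meanInfDistIic_lt hδ hst ?_).ne h.symm, fun h => ?_⟩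
  · rintro ⟨r, hr, hrt⟩
    exact hne ((hfib r t hrt s ⟨hr, hst⟩).trans hrt)
  · have himage : δ '' Iic s = δ '' Iic t := by
      refine (image_mono (Iic_subset_Iic.2 hst)).antisymm (image_subset_iff.2 fun r hr => ?_)
      rcases le_total r s with hrs | hsr
      · exact mem_image_of_mem δ hrs
      · exact ⟨s, self_mem_Iic, (hfib s t h r ⟨hsr, hr⟩).symm⟩
    rw [meanInfDistIic, meanInfDistIic, himage]

lemma isArc_range_of_ordConnected_fibres [MetricSpace X] {δ : I → X} (hδ : Continuous δ)
    (hfib : ∀ x y, δ x = δ y → ∀ z ∈ Icc x y, δ z = δ x) : IsArc (range δ) (δ 0) (δ 1) := by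
  set h : I → ℝ := fun t => -meanInfDistIic δ t
  have hcont : Continuous h := (continuous_meanInfDistIic hδ).neg
  have hmono : Monotone h := (antitone_meanInfDistIic hδ).neg
  have heq (s t : I) : h s = h t ↔ δ s = δ t := neg_inj.trans (meanInfDistIic_eq_iff hδ hfib s t)
  have hmaps (t : I) : h t ∈ Icc (h 0) (h 1) :=
    ⟨hmono unitInterval.nonneg', hmono unitInterval.le_one'⟩
  have hsurj : ∀ v ∈ Icc (h 0) (h 1), ∃ t, h t = v := fun v hv =>
    intermediate_value_univ 0 1 hcont hv
  choose! g hg using hsurj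
  have hδg (t : I) : δ (g (h t)) = δ t := (heq _ _).1 (hg _ (hmaps t))
  refine ⟨δ ∘ g, h 0, h 1, hmono unitInterval.nonneg', ?_, fun v hv w hw hvw => ?_, hδg 0, hδg 1,
    ?_⟩
  · refine continuousOn_iff_isClosed.2 fun C hC => ⟨h '' (δ ⁻¹' C),
      ((hC.preimage hδ).isCompact.image hcont).isClosed, ?_⟩
    ext v
    refine and_congr_left fun hv => ⟨fun hvC => ⟨g v, hvC, hg v hv⟩, ?_⟩
    rintro ⟨t, htC, rfl⟩
    simpa only [mem_preimage, Function.comp_apply, hδg] using htC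
  · rw [← hg v hv, ← hg w hw, heq]
    exact hvw
  · refine Subset.antisymm (image_subset_iff.2 fun v _ => mem_range_self _) ?_
    rintro _ ⟨t, rfl⟩
    exact ⟨h t, hmaps t, hδg t⟩

lemma exists_isArc_subset_range [TopologicalSpace X] [T2Space X] [SecondCountableTopology X]
    {γ : I → X} (hγ : Continuous γ) : ∃ A ⊆ range γ, IsArc A (γ 0) (γ 1) := by
  have : CompactSpace (range γ) := isCompact_iff_compactSpace.1 (isCompact_range hγ)
  let _ := TopologicalSpace.metrizableSpaceMetric (range γ)
  obtain ⟨δ, hδ, hδ₀, hδ₁, hfib⟩ :=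
    exists_continuous_ordConnected_fibres (hγ.codRestrict mem_range_self)
  obtain ⟨α, s, t, hst, hα, hαi, hαs, hαt, -⟩ := isArc_range_of_ordConnected_fibres hδ hfib
  refine ⟨_, ?_, fun u => (α u : X), s, t, hst, continuous_subtype_val.comp_continuousOn hα,
    Subtype.val_injective.comp_injOn hαi, ?_, ?_, rfl⟩
  · rintro _ ⟨u, -, rfl⟩
    exact (α u).2
  · exact congrArg Subtype.val (hαs.trans hδ₀)
  · exact congrArg Subtype.val (hαt.trans hδ₁)

lemma exists_isArc_of_joinedIn [TopologicalSpace X] [T2Space X] [SecondCountableTopology X]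
    {F : Set X} {x y : X} (h : JoinedIn F x y) : ∃ A ⊆ F, IsArc A x y := by
  obtain ⟨A, hA, hAxy⟩ := exists_isArc_subset_range h.somePath.continuous
  rw [h.somePath.source, h.somePath.target] at hAxy
  exact ⟨A, hA.trans (range_subset_iff.2 h.somePath_mem), hAxy⟩

end Reparametrization

namespace IsArc

variable {X : Type*} [TopologicalSpace X] {A B K : Set X} {x y z : X}

lemma symm (h : IsArc A x y) : IsArc A y x := by
  obtain ⟨γ, s, t, hst, hc, hi, rfl, rfl, rfl⟩ := h
  have hmaps : MapsTo (fun u : ℝ => -u) (Icc (-t) (-s)) (Icc s t) := fun u hu =>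
    ⟨by linarith [hu.2], by linarith [hu.1]⟩
  refine ⟨γ ∘ fun u => -u, -t, -s, neg_le_neg hst, hc.comp continuous_neg.continuousOn hmaps,
    hi.comp neg_injective.injOn hmaps, ?_, ?_, ?_⟩
  · rw [Function.comp_apply, neg_neg]
  · rw [Function.comp_apply, neg_neg]
  · rw [image_comp, image_neg_eq_neg, neg_Icc, neg_neg, neg_neg]

lemma singleton (x : X) : IsArc {x} x x :=
  ⟨fun _ => x, 0, 0, le_rfl, continuousOn_const, by simp, rfl, rfl, by simp⟩

lemma isClosed [T2Space X] (h : IsArc A x y) : IsClosed A := by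
  obtain ⟨γ, s, t, -, hc, -, -, -, rfl⟩ := h
  exact (isCompact_Icc.image_of_continuousOn hc).isClosed

lemma left_mem (h : IsArc A x y) : x ∈ A := by
  obtain ⟨γ, s, t, hst, -, -, rfl, -, rfl⟩ := h
  exact mem_image_of_mem γ (left_mem_Icc.2 hst)

lemma right_mem (h : IsArc A x y) : y ∈ A := h.symm.left_mem

lemma exists_split (h : IsArc A x y) (hz : z ∈ A) :
    ∃ A₁ ⊆ A, ∃ A₂ ⊆ A, IsArc A₁ x z ∧ IsArc A₂ z y ∧ A₁ ∩ A₂ = {z} := by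
  obtain ⟨γ, s, t, -, hc, hi, rfl, rfl, rfl⟩ := h
  obtain ⟨m, hm, rfl⟩ := hz
  have hleft : Icc s m ⊆ Icc s t := Icc_subset_Icc_right hm.2
  have hright : Icc m t ⊆ Icc s t := Icc_subset_Icc_left hm.1
  refine ⟨γ '' Icc s m, image_mono hleft, γ '' Icc m t, image_mono hright,
    ⟨γ, s, m, hm.1, hc.mono hleft, hi.mono hleft, rfl, rfl, rfl⟩,
    ⟨γ, m, t, hm.2, hc.mono hright, hi.mono hright, rfl, rfl, rfl⟩, ?_⟩
  rw [← hi.image_inter hleft hright, Icc_inter_Icc_eq_singleton hm.1 hm.2, image_singleton]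

lemma exists_first_hit (h : IsArc A x y) (hK : IsClosed K) (hne : (A ∩ K).Nonempty) :
    ∃ z, ∃ B ⊆ A, IsArc B x z ∧ B ∩ K = {z} := by
  obtain ⟨γ, s, t, -, hc, hi, rfl, rfl, rfl⟩ := h
  obtain ⟨_, ⟨u, hu, rfl⟩, huK⟩ := hne
  have hcompact : IsCompact (Icc s t ∩ γ ⁻¹' K) :=
    isCompact_Icc.of_isClosed_subset (hc.preimage_isClosed_of_isClosed isClosed_Icc hK)
      inter_subset_left
  obtain ⟨m, ⟨hm, hmK⟩, hmin⟩ := hcompact.exists_isLeast ⟨u, hu, huK⟩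
  have hleft : Icc s m ⊆ Icc s t := Icc_subset_Icc_right hm.2
  refine ⟨γ m, γ '' Icc s m, image_mono hleft,
    ⟨γ, s, m, hm.1, hc.mono hleft, hi.mono hleft, rfl, rfl, rfl⟩,
    Subset.antisymm ?_ (singleton_subset_iff.2 ⟨⟨m, right_mem_Icc.2 hm.1, rfl⟩, hmK⟩)⟩
  rintro _ ⟨⟨v, hv, rfl⟩, hvK⟩
  exact congrArg γ (hv.2.antisymm (hmin ⟨hleft hv, hvK⟩))

lemma exists_concat (hA : IsArc A x y) (hB : IsArc B y z) :
    ∃ (γ : ℝ → X) (s m t : ℝ), s ≤ m ∧ m ≤ t ∧ ContinuousOn γ (Icc s t) ∧ InjOn γ (Icc s m) ∧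
      InjOn γ (Icc m t) ∧ γ s = x ∧ γ m = y ∧ γ t = z ∧ γ '' Icc s m = A ∧ γ '' Icc m t = B := by
  obtain ⟨f, s, m, hsm, hfc, hfi, rfl, hfm, rfl⟩ := hA
  obtain ⟨g, c, d, hcd, hgc, hgi, rfl, rfl, rfl⟩ := hB
  have htranslate : (fun u => u + (c - m)) '' Icc m (m + (d - c)) = Icc c d := by
    rw [image_add_const_Icc]; congr 1 <;> ring
  have hmaps : MapsTo (fun u => u + (c - m)) (Icc m (m + (d - c))) (Icc c d) :=
    mapsTo_iff_image_subset.2 htranslate.le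
  set g' : ℝ → X := g ∘ fun u => u + (c - m)
  have hg'm : g' m = g c := congrArg g (by ring)
  set γ : ℝ → X := (Iic m).piecewise f g'
  have hmt : m ≤ m + (d - c) := by linarith
  have hγf : EqOn γ f (Icc s m) := fun u hu => piecewise_eq_of_mem _ _ _ hu.2
  have hγg : EqOn γ g' (Icc m (m + (d - c))) := fun u hu => by
    rcases hu.1.eq_or_lt with rfl | hlt
    · rw [hγf (right_mem_Icc.2 hsm), hfm, hg'm]
    · exact piecewise_eq_of_notMem _ _ _ hlt.not_ge
  refine ⟨γ, s, m, m + (d - c), hsm, hmt, ?_, hγf.injOn_iff.2 hfi,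
    hγg.injOn_iff.2 (hgi.comp (add_left_injective _).injOn hmaps), hγf (left_mem_Icc.2 hsm),
    (hγf (right_mem_Icc.2 hsm)).trans hfm, (hγg (right_mem_Icc.2 hmt)).trans (congrArg g (by ring)),
    hγf.image_eq, ?_⟩
  · rw [← Icc_union_Icc_eq_Icc hsm hmt]
    exact (hfc.congr hγf).union_of_isClosed ((hgc.comp (by fun_prop) hmaps).congr hγg)
      isClosed_Icc isClosed_Icc
  · rw [hγg.image_eq, image_comp, htranslate]

lemma trans (hA : IsArc A x y) (hB : IsArc B y z) (hAB : A ∩ B ⊆ {y}) : IsArc (A ∪ B) x z := by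
  obtain ⟨γ, s, m, t, hsm, hmt, hc, hi₁, hi₂, rfl, rfl, rfl, rfl, rfl⟩ := hA.exists_concat hB
  refine ⟨γ, s, t, hsm.trans hmt, hc, ?_, rfl, rfl, ?_⟩
  · rw [← Icc_union_Ioc_eq_Icc hsm hmt, injOn_union]
    · refine ⟨hi₁, hi₂.mono Ioc_subset_Icc_self, fun u hu v hv huv => hv.1.ne' ?_⟩
      have hv' := Ioc_subset_Icc_self hv
      exact hi₂ hv' (left_mem_Icc.2 hmt)
        (hAB ⟨huv ▸ mem_image_of_mem γ hu, mem_image_of_mem γ hv'⟩)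
    · exact disjoint_left.2 fun u hu hu' => hu'.1.not_ge hu.2
  · rw [← image_union, Icc_union_Icc_eq_Icc hsm hmt]

end IsArc

section Jordan

variable {X : Type} [TopologicalSpace X] {A B J : Set X} {x y z : X}

lemma isJordanCurve_image_Icc [T2Space X] {γ : ℝ → X} {s t : ℝ} (hst : s < t)
    (hc : ContinuousOn γ (Icc s t)) (hloop : γ s = γ t) (hi : InjOn γ (Ico s t)) :
    IsJordanCurve (γ '' Icc s t) := by
  obtain ⟨p, rfl⟩ : ∃ p, t = s + p := ⟨t - s, by ring⟩
  have hp : 0 < p := by linarith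
  have : Fact (0 < p) := ⟨hp⟩
  have hcont : Continuous (AddCircle.liftIco p s γ) := AddCircle.liftIco_continuous hloop hc
  have hinj : Function.Injective (AddCircle.liftIco p s γ) :=
    hi.injective.comp (AddCircle.equivIco p s).injective
  have hrange : range (AddCircle.liftIco p s γ) = γ '' Icc s (s + p) := by
    rw [AddCircle.liftIco, (AddCircle.equivIco p s).surjective.range_comp, range_domRestrict,
      ← Ico_insert_right hst.le, image_insert_eq, insert_eq_of_mem]
    exact ⟨s, left_mem_Ico.2 hst, hloop⟩
  exact ⟨(AddCircle.homeomorphAddCircle 1 p one_ne_zero hp.ne').trans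
    ((hcont.isClosedEmbedding hinj).isEmbedding.toHomeomorph.trans (.setCongr hrange))⟩

lemma IsArc.isJordanCurve_union [T2Space X] (hA : IsArc A x y) (hB : IsArc B x y) (hxy : x ≠ y)
    (hAB : A ∩ B ⊆ {x, y}) : IsJordanCurve (A ∪ B) := by
  obtain ⟨γ, s, m, t, hsm, hmt, hc, hi₁, hi₂, hs, hm, ht, rfl, rfl⟩ := hA.exists_concat hB.symm
  have hmt' : m < t := hmt.lt_of_ne fun h => hxy (by rw [← ht, ← hm, h])
  rw [← image_union, Icc_union_Icc_eq_Icc hsm hmt]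
  refine isJordanCurve_image_Icc (hsm.trans_lt hmt') hc (hs.trans ht.symm) ?_
  rw [← Icc_union_Ioo_eq_Ico hsm hmt', injOn_union]
  · refine ⟨hi₁, hi₂.mono Ioo_subset_Icc_self, fun u hu v hv huv => ?_⟩
    have hv' := Ioo_subset_Icc_self hv
    rcases hAB ⟨huv ▸ mem_image_of_mem γ hu, mem_image_of_mem γ hv'⟩ with h | h
    · exact hv.2.ne (hi₂ hv' (right_mem_Icc.2 hmt) (h.trans ht.symm))
    · exact hv.1.ne' (hi₂ hv' (left_mem_Icc.2 hmt) (Eq.trans h hm.symm))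
  · exact disjoint_left.2 fun u hu hu' => hu'.1.not_ge hu.2

namespace IsJordanCurve

lemma isClosed [T2Space X] (hJ : IsJordanCurve J) : IsClosed J := by
  obtain ⟨φ⟩ := hJ
  have : Fact ((0 : ℝ) < 1) := ⟨one_pos⟩
  have : CompactSpace J := φ.compactSpace
  exact (isCompact_iff_compactSpace.2 this).isClosed

lemma exists_loop (hJ : IsJordanCurve J) (hx : x ∈ J) : ∃ γ : ℝ → X, Continuous γ ∧
    InjOn γ (Ico 0 1) ∧ γ 0 = x ∧ γ 1 = x ∧ γ '' Ico 0 1 = J := by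
  obtain ⟨φ⟩ := hJ
  have : Fact ((0 : ℝ) < 1) := ⟨one_pos⟩
  set ψ : AddCircle (1 : ℝ) → X := fun p => φ (p + φ.symm ⟨x, hx⟩)
  have hψ : Function.Injective ψ :=
    Subtype.val_injective.comp (φ.injective.comp (add_left_injective _))
  have hψ₀ : ψ 0 = x := by simp only [ψ, zero_add, φ.apply_symm_apply]
  have hinj : InjOn ((↑) : ℝ → AddCircle (1 : ℝ)) (Ico 0 1) := fun u hu v hv huv =>
    (AddCircle.coe_eq_coe_iff_of_mem_Ico (a := 0) (by rwa [zero_add]) (by rwa [zero_add])).1 huv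
  refine ⟨fun u => ψ u, ?_, hψ.comp_injOn hinj, hψ₀, ?_, ?_⟩
  · have := AddCircle.continuous_mk' (1 : ℝ)
    fun_prop
  · exact (congrArg ψ (AddCircle.coe_period 1)).trans hψ₀
  · have hcircle := AddCircle.coe_image_Ico_eq (1 : ℝ) 0
    rw [zero_add] at hcircle
    rw [← image_image ψ, hcircle, image_univ]
    exact ((φ.surjective.comp (add_right_surjective _)).range_comp _).trans Subtype.range_coe

lemma exists_isArc_through (hJ : IsJordanCurve J) (hx : x ∈ J) (hy : y ∈ J) (hxy : x ≠ y)
    (hz : z ∈ J) : ∃ P ⊆ J, IsArc P x y ∧ z ∈ P := by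
  obtain ⟨γ, hc, hi, rfl, h₁, rfl⟩ := hJ.exists_loop hx
  obtain ⟨c, hc', rfl⟩ := hy
  obtain ⟨d, hd, rfl⟩ := hz
  have h₀ : (0 : ℝ) ∈ Ico (0 : ℝ) 1 := left_mem_Ico.2 one_pos
  have hc₀ : 0 < c := hc'.1.lt_of_ne fun h => hxy (congrArg γ h)
  have hi' : InjOn γ (Icc c 1) := by
    rw [← Ico_insert_right hc'.2.le, injOn_insert right_notMem_Ico]
    refine ⟨hi.mono (Ico_subset_Ico_left hc'.1), ?_⟩
    rintro ⟨u, hu, hu₁⟩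
    exact (hc₀.trans_le hu.1).ne' (hi (Ico_subset_Ico_left hc'.1 hu) h₀ (hu₁.trans h₁))
  rcases le_total d c with hdc | hcd
  · have hsub : Icc 0 c ⊆ Ico (0 : ℝ) 1 := Icc_subset_Ico_right hc'.2
    exact ⟨γ '' Icc 0 c, image_mono hsub,
      ⟨γ, 0, c, hc'.1, hc.continuousOn, hi.mono hsub, rfl, rfl, rfl⟩,
      mem_image_of_mem γ ⟨hd.1, hdc⟩⟩
  · refine ⟨γ '' Icc c 1, ?_,
      IsArc.symm ⟨γ, c, 1, hc'.2.le, hc.continuousOn, hi', rfl, h₁, rfl⟩,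
      mem_image_of_mem γ ⟨hcd, hd.2.le⟩⟩
    rw [← Ico_insert_right hc'.2.le, image_insert_eq, insert_subset_iff, h₁]
    exact ⟨hx, image_mono (Ico_subset_Ico_left hc'.1)⟩

end IsJordanCurve

end Jordan

/-- Two points are cocyclic if they lie on a common Jordan curve. The relation is not transitive,
as a wedge of two circles shows. -/
def Cocyclic {X : Type} [TopologicalSpace X] (x y : X) : Prop :=
  ∃ J : Set X, IsJordanCurve J ∧ x ∈ J ∧ y ∈ J

/-- The set of points cocyclic with both `p` and `q`. For distinct points `p` and `q` of a maximal
cyclic set it recovers that set. -/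
def cyclicClass {X : Type} [TopologicalSpace X] (p q : X) : Set X :=
  {x | Cocyclic x p ∧ Cocyclic x q}

section Cocyclic

variable {X : Type} [TopologicalSpace X] {J J₁ J₂ O D T T' : Set X} {a b c d p q u v : X}

lemma Cocyclic.symm (h : Cocyclic a b) : Cocyclic b a := by
  obtain ⟨J, hJ, ha, hb⟩ := h
  exact ⟨J, hJ, hb, ha⟩

lemma CyclicallyConnected.cocyclic (hT : CyclicallyConnected T) (ha : a ∈ T) (hb : b ∈ T) :
    Cocyclic a b := by
  obtain ⟨J, -, hJ⟩ := hT a ha b hb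
  exact ⟨J, hJ⟩

variable [T2Space X]

namespace IsJordanCurve

lemma exists_superset_of_isArc (hJ : IsJordanCurve J) (hD : IsArc D u v) (huv : u ≠ v)
    (hu : u ∈ J) (hv : v ∈ J) (hDJ : D ∩ J ⊆ {u, v}) (hb : b ∈ J) :
    ∃ O, IsJordanCurve O ∧ D ⊆ O ∧ b ∈ O := by
  obtain ⟨P, hPJ, hP, hbP⟩ := hJ.exists_isArc_through hu hv huv hb
  exact ⟨D ∪ P, hD.isJordanCurve_union hP huv ((inter_subset_inter_right D hPJ).trans hDJ),
    subset_union_left, Or.inr hbP⟩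

lemma cocyclic_of_nontrivial_inter (hJ : IsJordanCurve J) (hO : IsJordanCurve O)
    (h : (J ∩ O).Nontrivial) (ha : a ∈ O) (hb : b ∈ J) : Cocyclic a b := by
  by_cases haJ : a ∈ J
  · exact ⟨J, hJ, haJ, hb⟩
  obtain ⟨p, ⟨hpJ, hpO⟩, q, ⟨hqJ, hqO⟩, hpq⟩ := h
  obtain ⟨P, -, hP, haP⟩ := hO.exists_isArc_through hpO hqO hpq ha
  obtain ⟨P₁, -, P₂, -, hP₁, hP₂, hP₁₂⟩ := hP.exists_split haP
  obtain ⟨u, D₁, hD₁P, hD₁, hD₁J⟩ := hP₁.symm.exists_first_hit hJ.isClosed ⟨p, hP₁.left_mem, hpJ⟩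
  obtain ⟨v, D₂, hD₂P, hD₂, hD₂J⟩ := hP₂.exists_first_hit hJ.isClosed ⟨q, hP₂.right_mem, hqJ⟩
  have hu : u ∈ J := (hD₁J.ge rfl).2
  have hv : v ∈ J := (hD₂J.ge rfl).2
  have hD₁₂ : D₁ ∩ D₂ ⊆ {a} := (inter_subset_inter hD₁P hD₂P).trans hP₁₂.le
  have huv : u ≠ v := by
    rintro rfl
    exact haJ (hD₁₂ ⟨hD₁.right_mem, hD₂.right_mem⟩ ▸ hu)
  have hDJ : (D₁ ∪ D₂) ∩ J ⊆ {u, v} := by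
    rw [union_inter_distrib_right, hD₁J, hD₂J]
    rfl
  obtain ⟨K, hK, hDK, hbK⟩ :=
    hJ.exists_superset_of_isArc (hD₁.symm.trans hD₂ hD₁₂) huv hu hv hDJ hb
  exact ⟨K, hK, hDK (Or.inr hD₂.left_mem), hbK⟩

lemma exists_isArc_through_of_inter_subset_singleton (hJ₁ : IsJordanCurve J₁)
    (hJ₂ : IsJordanCurve J₂) (huv : u ≠ v) (hu : u ∈ J ∩ J₁) (hv : v ∈ J ∩ J₂)
    (h₁ : J ∩ J₁ ⊆ {u}) (h₂ : J ∩ J₂ ⊆ {v}) (hd : d ∈ J₁ ∩ J₂) :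
    ∃ D, IsArc D u v ∧ d ∈ D ∧ D ∩ J ⊆ {u, v} := by
  have hud : u ≠ d := fun h => huv (h₂ ⟨hu.1, h ▸ hd.2⟩)
  obtain ⟨P, hPJ₁, hP, -⟩ := hJ₁.exists_isArc_through hu.2 hd.1 hud hd.1
  obtain ⟨x, B, hBP, hB, hBJ₂⟩ := hP.exists_first_hit hJ₂.isClosed ⟨d, hP.right_mem, hd.2⟩
  have hx : x ∈ J₂ := (hBJ₂.ge rfl).2
  have hxv : x ≠ v := by
    rintro rfl
    exact huv (h₁ ⟨hv.1, hPJ₁ (hBP hB.right_mem)⟩).symm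
  obtain ⟨Q, hQJ₂, hQ, hdQ⟩ := hJ₂.exists_isArc_through hx hv.2 hxv hd.2
  refine ⟨B ∪ Q, hB.trans hQ ((inter_subset_inter_right B hQJ₂).trans hBJ₂.le), Or.inr hdQ, ?_⟩
  rintro w ⟨hwB | hwQ, hwJ⟩
  · exact Or.inl (h₁ ⟨hwJ, hPJ₁ (hBP hwB)⟩)
  · exact Or.inr (h₂ ⟨hwJ, hQJ₂ hwQ⟩)

lemma exists_nontrivial_inter (hJ : IsJordanCurve J) (huv : u ≠ v) (hu : u ∈ J) (hv : v ∈ J)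
    (hdu : Cocyclic d u) (hdv : Cocyclic d v) :
    ∃ O, IsJordanCurve O ∧ d ∈ O ∧ (J ∩ O).Nontrivial := by
  obtain ⟨J₁, hJ₁, hd₁, hu₁⟩ := hdu
  obtain ⟨J₂, hJ₂, hd₂, hv₂⟩ := hdv
  by_cases h₁ : (J ∩ J₁).Nontrivial
  · exact ⟨J₁, hJ₁, hd₁, h₁⟩
  by_cases h₂ : (J ∩ J₂).Nontrivial
  · exact ⟨J₂, hJ₂, hd₂, h₂⟩
  rw [not_nontrivial_iff] at h₁ h₂
  obtain ⟨D, hD, hdD, hDJ⟩ := exists_isArc_through_of_inter_subset_singleton hJ₁ hJ₂ huv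
    ⟨hu, hu₁⟩ ⟨hv, hv₂⟩ (fun w hw => h₁ hw ⟨hu, hu₁⟩) (fun w hw => h₂ hw ⟨hv, hv₂⟩) ⟨hd₁, hd₂⟩
  obtain ⟨O, hO, hDO, -⟩ := hJ.exists_superset_of_isArc hD huv hu hv hDJ hu
  exact ⟨O, hO, hDO hdD, u, ⟨hu, hDO hD.left_mem⟩, v, ⟨hv, hDO hD.right_mem⟩, huv⟩

lemma cocyclic_of_mem (hJ : IsJordanCurve J) (huv : u ≠ v) (hu : u ∈ J) (hv : v ∈ J)
    (hdu : Cocyclic d u) (hdv : Cocyclic d v) (hb : b ∈ J) : Cocyclic d b := by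
  obtain ⟨O, hO, hd, hJO⟩ := hJ.exists_nontrivial_inter huv hu hv hdu hdv
  exact hJ.cocyclic_of_nontrivial_inter hO hJO hd hb

end IsJordanCurve

lemma Cocyclic.of_mem_cyclicClass (huv : u ≠ v) (h : Cocyclic u v) (hc : c ∈ cyclicClass u v)
    (hd : d ∈ cyclicClass u v) : Cocyclic c d := by
  obtain ⟨J, hJ, hu, hv⟩ := h
  obtain ⟨O, hO, hdO, p, hp, q, hq, hpq⟩ := hJ.exists_nontrivial_inter huv hu hv hd.1 hd.2
  have hcJ {b : X} (hb : b ∈ J) : Cocyclic c b := hJ.cocyclic_of_mem huv hu hv hc.1 hc.2 hb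
  exact hO.cocyclic_of_mem hpq hp.2 hq.2 (hcJ hp.1) (hcJ hq.1) hdO

lemma cyclicallyConnected_cyclicClass (hpq : p ≠ q) (h : Cocyclic p q) :
    CyclicallyConnected (cyclicClass p q) := by
  have hp : p ∈ cyclicClass p q := by
    obtain ⟨J, hJ, hpJ, hqJ⟩ := h
    exact ⟨⟨J, hJ, hpJ, hpJ⟩, ⟨J, hJ, hpJ, hqJ⟩⟩
  have hq : q ∈ cyclicClass p q := by
    obtain ⟨J, hJ, hpJ, hqJ⟩ := h
    exact ⟨⟨J, hJ, hqJ, hpJ⟩, ⟨J, hJ, hqJ, hqJ⟩⟩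
  have hne : ∀ x ∈ cyclicClass p q, ∀ y ∈ cyclicClass p q, x ≠ y →
      ∃ J ⊆ cyclicClass p q, IsJordanCurve J ∧ x ∈ J ∧ y ∈ J := by
    intro x hx y hy hxy
    obtain ⟨J, hJ, hxJ, hyJ⟩ := Cocyclic.of_mem_cyclicClass hpq h hx hy
    refine ⟨J, fun b hb => ⟨?_, ?_⟩, hJ, hxJ, hyJ⟩
    · exact (hJ.cocyclic_of_mem hxy hxJ hyJ hx.1.symm hy.1.symm hb).symm
    · exact (hJ.cocyclic_of_mem hxy hxJ hyJ hx.2.symm hy.2.symm hb).symm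
  intro x hx y hy
  rcases ne_or_eq x y with hxy | rfl
  · exact hne x hx y hy hxy
  · obtain ⟨w, hw, hwx⟩ := Set.Nontrivial.exists_ne ⟨p, hp, q, hq, hpq⟩ x
    obtain ⟨J, hJ, hJordan, hxJ, -⟩ := hne x hx w hw hwx.symm
    exact ⟨J, hJ, hJordan, hxJ, hxJ⟩

namespace MaximalCyclic

lemma cyclicClass_eq (hT : MaximalCyclic T) (hp : p ∈ T) (hq : q ∈ T) (hpq : p ≠ q) :
    cyclicClass p q = T :=
  hT.2.2 _ (cyclicallyConnected_cyclicClass hpq (hT.2.1.cocyclic hp hq)) fun _ hx =>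
    ⟨hT.2.1.cocyclic hx hp, hT.2.1.cocyclic hx hq⟩

lemma eq_of_nontrivial_inter (hT : MaximalCyclic T) (hT' : MaximalCyclic T')
    (h : (T ∩ T').Nontrivial) : T = T' := by
  obtain ⟨p, hp, q, hq, hpq⟩ := h
  rw [← hT.cyclicClass_eq hp.1 hq.1 hpq, hT'.cyclicClass_eq hp.2 hq.2 hpq]

lemma subset_of_nontrivial_inter (hT : MaximalCyclic T) (hJ : IsJordanCurve J)
    (h : (T ∩ J).Nontrivial) : J ⊆ T := by
  obtain ⟨p, hp, q, hq, hpq⟩ := h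
  rw [← hT.cyclicClass_eq hp.1 hq.1 hpq]
  exact fun b hb => ⟨⟨J, hJ, hb, hp.2⟩, ⟨J, hJ, hb, hq.2⟩⟩

end MaximalCyclic

end Cocyclic

section Counting

lemma IsArc.exists_subset_inter_eq_singleton {X : Type*} [TopologicalSpace X] {A J J' : Set X}
    {x x' : X} (hA : IsArc A x x') (hJ : IsClosed J) (hJ' : IsClosed J') (hx : x ∈ J)
    (hx' : x' ∈ J') : ∃ a a', ∃ B ⊆ A, IsArc B a a' ∧ B ∩ J = {a} ∧ B ∩ J' = {a'} := by
  obtain ⟨a', B', hB'A, hB', hB'J'⟩ := hA.exists_first_hit hJ' ⟨x', hA.right_mem, hx'⟩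
  obtain ⟨a, B, hBB', hB, hBJ⟩ := hB'.symm.exists_first_hit hJ ⟨x, hB'.left_mem, hx⟩
  refine ⟨a, a', B, hBB'.trans hB'A, hB.symm, hBJ, Subset.antisymm ?_ ?_⟩
  · exact (inter_subset_inter_left J' hBB').trans hB'J'.le
  · exact singleton_subset_iff.2 ⟨hB.left_mem, (hB'J'.ge rfl).2⟩

variable {X : Type} [TopologicalSpace X] [T2Space X] {A A' B B' J J' T T' : Set X}
  {a a' b b' w x x' y y' : X}

namespace IsJordanCurve

lemma exists_nontrivial_inter_of_disjoint_links (hJ : IsJordanCurve J) (hJ' : IsJordanCurve J')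
    (hA : IsArc A a a') (hB : IsArc B b b') (hAB : Disjoint A B) (hAJ : A ∩ J = {a})
    (hAJ' : A ∩ J' = {a'}) (hBJ : B ∩ J = {b}) (hBJ' : B ∩ J' = {b'}) (hJJ' : J ∩ J' ⊆ A ∪ B) :
    ∃ K, IsJordanCurve K ∧ (J ∩ K).Nontrivial ∧ (J' ∩ K).Nontrivial := by
  have ha : a ∈ J := (hAJ.ge rfl).2
  have ha' : a' ∈ J' := (hAJ'.ge rfl).2
  have hb : b ∈ J := (hBJ.ge rfl).2
  have hb' : b' ∈ J' := (hBJ'.ge rfl).2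
  have hab : a ≠ b := hAB.ne_of_mem hA.left_mem hB.left_mem
  have hab' : a' ≠ b' := hAB.ne_of_mem hA.right_mem hB.right_mem
  obtain ⟨P, hPJ, hP, -⟩ := hJ.exists_isArc_through ha hb hab ha
  obtain ⟨P', hPJ', hP', -⟩ := hJ'.exists_isArc_through ha' hb' hab' ha'
  have hAP' : IsArc (A ∪ P') a b' :=
    hA.trans hP' ((inter_subset_inter_right A hPJ').trans hAJ'.le)
  have hPB : IsArc (P ∪ B) a b' :=
    hP.trans hB ((inter_subset_inter_left B hPJ).trans (inter_comm B J ▸ hBJ.le))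
  refine ⟨A ∪ P' ∪ (P ∪ B), hAP'.isJordanCurve_union hPB
    (hAB.ne_of_mem hA.left_mem hB.right_mem) ?_, ⟨a, ⟨ha, ?_⟩, b, ⟨hb, ?_⟩, hab⟩,
    ⟨a', ⟨ha', ?_⟩, b', ⟨hb', ?_⟩, hab'⟩⟩
  · rintro w ⟨hwA | hwP', hwP | hwB⟩
    · exact Or.inl (hAJ.le ⟨hwA, hPJ hwP⟩)
    · exact (disjoint_left.1 hAB hwA hwB).elim
    · rcases hJJ' ⟨hPJ hwP, hPJ' hwP'⟩ with hwA | hwB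
      · exact Or.inl (hAJ.le ⟨hwA, hPJ hwP⟩)
      · exact Or.inr (hBJ'.le ⟨hwB, hPJ' hwP'⟩)
    · exact Or.inr (hBJ'.le ⟨hwB, hPJ' hwP'⟩)
  · exact Or.inl (Or.inl hA.left_mem)
  · exact Or.inr (Or.inr hB.left_mem)
  · exact Or.inl (Or.inl hA.right_mem)
  · exact Or.inr (Or.inr hB.right_mem)

lemma exists_nontrivial_inter_of_notMem (hJ : IsJordanCurve J) (hJ' : IsJordanCurve J')
    (hw : w ∈ J ∩ J') (hJJ' : (J ∩ J').Subsingleton) (hA : IsArc A x x') (hx : x ∈ J)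
    (hx' : x' ∈ J') (hwA : w ∉ A) :
    ∃ K, IsJordanCurve K ∧ (J ∩ K).Nontrivial ∧ (J' ∩ K).Nontrivial := by
  obtain ⟨a, a', B, hBA, hB, hBJ, hBJ'⟩ :=
    hA.exists_subset_inter_eq_singleton hJ.isClosed hJ'.isClosed hx hx'
  exact hJ.exists_nontrivial_inter_of_disjoint_links hJ' hB (.singleton w)
    (disjoint_singleton_right.2 fun hwB => hwA (hBA hwB)) hBJ hBJ'
    (singleton_inter_of_mem hw.1) (singleton_inter_of_mem hw.2)
    fun _ hz => Or.inr (hJJ' hz hw)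

lemma exists_nontrivial_inter_of_disjoint_arcs (hJ : IsJordanCurve J) (hJ' : IsJordanCurve J')
    (hA : IsArc A x x') (hB : IsArc B y y') (hAB : Disjoint A B) (hx : x ∈ J) (hx' : x' ∈ J')
    (hy : y ∈ J) (hy' : y' ∈ J') :
    ∃ K, IsJordanCurve K ∧ (J ∩ K).Nontrivial ∧ (J' ∩ K).Nontrivial := by
  by_cases hJJ' : (J ∩ J').Nontrivial
  · exact ⟨J, hJ, hJJ'.mono (subset_inter inter_subset_left inter_subset_left),
      by rwa [inter_comm]⟩
  rw [not_nontrivial_iff] at hJJ'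
  rcases (J ∩ J').eq_empty_or_nonempty with hempty | ⟨w, hw⟩
  · obtain ⟨a, a', A₁, hA₁A, hA₁, hA₁J, hA₁J'⟩ :=
      hA.exists_subset_inter_eq_singleton hJ.isClosed hJ'.isClosed hx hx'
    obtain ⟨b, b', B₁, hB₁B, hB₁, hB₁J, hB₁J'⟩ :=
      hB.exists_subset_inter_eq_singleton hJ.isClosed hJ'.isClosed hy hy'
    exact hJ.exists_nontrivial_inter_of_disjoint_links hJ' hA₁ hB₁ (hAB.mono hA₁A hB₁B)
      hA₁J hA₁J' hB₁J hB₁J' (hempty ▸ empty_subset _)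
  · by_cases hwA : w ∈ A
    · exact hJ.exists_nontrivial_inter_of_notMem hJ' hw hJJ' hB hy hy' (disjoint_left.1 hAB hwA)
    · exact hJ.exists_nontrivial_inter_of_notMem hJ' hw hJJ' hA hx hx' hwA

end IsJordanCurve

lemma MaximalCyclic.eq_of_disjoint_isPathConnected [SecondCountableTopology X]
    (hT : MaximalCyclic T) (hT' : MaximalCyclic T') (hB : IsPathConnected B)
    (hB' : IsPathConnected B') (hBB' : Disjoint B B') (hTB : (T ∩ B).Nonempty)
    (hTB' : (T ∩ B').Nonempty) (hT'B : (T' ∩ B).Nonempty) (hT'B' : (T' ∩ B').Nonempty) :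
    T = T' := by
  obtain ⟨x, hxT, hxB⟩ := hTB
  obtain ⟨y, hyT, hyB⟩ := hTB'
  obtain ⟨x', hxT', hxB'⟩ := hT'B
  obtain ⟨y', hyT', hyB'⟩ := hT'B'
  obtain ⟨J, hJT, hJ, hx, hy⟩ := hT.2.1 x hxT y hyT
  obtain ⟨J', hJT', hJ', hx', hy'⟩ := hT'.2.1 x' hxT' y' hyT'
  obtain ⟨A, hAB, hA⟩ := exists_isArc_of_joinedIn (hB.joinedIn x hxB x' hxB')
  obtain ⟨A', hAB', hA'⟩ := exists_isArc_of_joinedIn (hB'.joinedIn y hyB y' hyB')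
  obtain ⟨K, hK, hJK, hJK'⟩ := hJ.exists_nontrivial_inter_of_disjoint_arcs hJ' hA hA'
    (hBB'.mono hAB hAB') hx hx' hy hy'
  have hKT : K ⊆ T := hT.subset_of_nontrivial_inter hK (hJK.mono (inter_subset_inter_left K hJT))
  have hKT' : K ⊆ T' :=
    hT'.subset_of_nontrivial_inter hK (hJK'.mono (inter_subset_inter_left K hJT'))
  exact hT.eq_of_nontrivial_inter hT'
    (hJK.mono (inter_subset_right.trans (subset_inter hKT hKT')))

end Counting

lemma isTopologicalBasis_isOpen_isPathConnected (X : Type*) [TopologicalSpace X]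
    [LocallyPathConnectedSpace X] :
    TopologicalSpace.IsTopologicalBasis {U : Set X | IsOpen U ∧ IsPathConnected U} :=
  .of_hasBasis_nhds fun x => (isOpen_isPathConnected_basis x).congr
    (fun _ => and_assoc.symm.trans and_right_comm) fun _ _ => rfl

theorem countable_maximalCyclic_general (X : Type) [TopologicalSpace X] [T2Space X]
    [SecondCountableTopology X] [LocallyPathConnectedSpace X] :
    {T : Set X | MaximalCyclic T}.Countable := by
  obtain ⟨𝓑, h𝓑, hcount, hbasis⟩ :=
    (isTopologicalBasis_isOpen_isPathConnected X).exists_countable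
  let meeting (B : Set X × Set X) : Set (Set X) :=
    {T | MaximalCyclic T ∧ Disjoint B.1 B.2 ∧ (T ∩ B.1).Nonempty ∧ (T ∩ B.2).Nonempty}
  have hmeeting : ∀ B ∈ 𝓑 ×ˢ 𝓑, (meeting B).Subsingleton := by
    rintro B hB T ⟨hT, hdisj, hT₁, hT₂⟩ T' ⟨hT', -, hT'₁, hT'₂⟩
    exact hT.eq_of_disjoint_isPathConnected hT' (h𝓑 hB.1).2 (h𝓑 hB.2).2 hdisj hT₁ hT₂ hT'₁ hT'₂
  refine ((hcount.prod hcount).biUnion fun B hB => (hmeeting B hB).countable).mono fun T hT => ?_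
  obtain ⟨p, hp, q, hq, hpq⟩ := not_subsingleton_iff.1 hT.1
  obtain ⟨U, V, hU, hV, hpU, hqV, hUV⟩ := t2_separation hpq
  obtain ⟨B, hB, hpB, hBU⟩ := hbasis.exists_subset_of_mem_open hpU hU
  obtain ⟨B', hB', hqB', hBV⟩ := hbasis.exists_subset_of_mem_open hqV hV
  exact mem_biUnion (x := (B, B')) ⟨hB, hB'⟩ ⟨hT, hUV.mono hBU hBV, ⟨p, hp, hpB⟩, q, hq, hqB'⟩

/-- A Peano space contains at most countably many maximal cyclic subsets. -/
theorem countable_maximalCyclic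
    (X : Type) [MetricSpace X] [CompactSpace X] [ConnectedSpace X] [LocallyConnectedSpace X] :
    {T : Set X | MaximalCyclic T}.Countable :=
  have := locallyPathConnectedSpace_of_compact_locallyConnected (X := X)
  countable_maximalCyclic_general X
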